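/- Fix integers j and k with k ≥ 1, and let S ⊆ ℤ be a set all of whose elements are congruent to j+k+1 modulo 2. If no matrix in ASM(k) avoids (S,j), then F_{j,k}|_S = 0. -/

import Mathlib

open MvPolynomial
open scoped Classical

noncomputable section

/-- The set `Q_k`: triples `(r,s,t)` with `|r|+|s| ≤ k-2`, `r+s ≡ k (mod 2)`,
`t ≡ 2|s|-k+2 (mod 4)` and `2|s|-k+2 ≤ t ≤ k-2-2|r|`. -/
def pentagramQ (k : ℤ) : Set (ℤ × ℤ × ℤ) :=
  {p | |p.1| + |p.2.1| ≤ k - 2 ∧ (2 : ℤ) ∣ (p.1 + p.2.1 - k) ∧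
    (4 : ℤ) ∣ (p.2.2 - (2 * |p.2.1| - k + 2)) ∧
    2 * |p.2.1| - k + 2 ≤ p.2.2 ∧ p.2.2 ≤ k - 2 - 2 * |p.1|}

/-- The set `P_k = Q_k ∪ Q_{k+1}`. -/
def pentagramP (k : ℤ) : Set (ℤ × ℤ × ℤ) := pentagramQ k ∪ pentagramQ (k + 1)

/-- The covering relation: `(r',s',t')` covers `(r,s,t)` iff `t' = t + 1` and
`|r'-r| + |s'-s| = 1`. -/
def pentagramCovers (x y : ℤ × ℤ × ℤ) : Prop :=
  y.2.2 = x.2.2 + 1 ∧ |y.1 - x.1| + |y.2.1 - x.2.1| = 1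

/-- The partial order on `P_k`: the reflexive-transitive closure of the covering
relation within `P_k`. -/
def pentagramLe (k : ℤ) : (ℤ × ℤ × ℤ) → (ℤ × ℤ × ℤ) → Prop :=
  Relation.ReflTransGen
    (fun x y => x ∈ pentagramP k ∧ y ∈ pentagramP k ∧ pentagramCovers x y)

/-- An order ideal of `P_k`: a downward-closed subset of `P_k`. -/
def IsPentagramOrderIdeal (k : ℤ) (I : Set (ℤ × ℤ × ℤ)) : Prop :=
  I ⊆ pentagramP k ∧ ∀ x y, y ∈ I → pentagramLe k x y → x ∈ I

/-- `P_k` realized as a `Finset` (it is contained in the displayed finite box). -/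
def pentagramPFinset (k : ℤ) : Finset (ℤ × ℤ × ℤ) :=
  ((Finset.Icc (-(k-1)) (k-1)) ×ˢ (Finset.Icc (-(k-1)) (k-1)) ×ˢ
    (Finset.Icc (-(k-1)) (k-1))).filter (fun p => p ∈ pentagramP k)

/-- The F-polynomial `F_{j,k} = Σ_{order ideals I of P_k} Π_{(r,s,t) ∈ I} y_{3r+s+j}`,
as an element of `ℤ[y_i : i ∈ ℤ] = MvPolynomial ℤ ℤ`. -/
def pentagramF (j k : ℤ) : MvPolynomial ℤ ℤ :=
  ∑ I ∈ (pentagramPFinset k).powerset.filter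
      (fun I : Finset (ℤ × ℤ × ℤ) => IsPentagramOrderIdeal k (↑I : Set (ℤ × ℤ × ℤ))),
    ∏ p ∈ I, X (3 * p.1 + p.2.1 + j)

/-- The ring endomorphism of `ℤ[y_i : i ∈ ℤ]` sending `y_i ↦ -1` for `i ∈ S`
and fixing the other variables; `substNeg S F` is `F|_S`. -/
def substNeg (S : Set ℤ) : MvPolynomial ℤ ℤ →+* MvPolynomial ℤ ℤ :=
  (MvPolynomial.aeval
    (fun i : ℤ => if i ∈ S then (-1 : MvPolynomial ℤ ℤ) else X i)).toRingHom

/-- The arithmetic progression `[a,b]_d = {a, a+d, a+2d, …, b}` (as a subset of `ℤ`). -/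
def AP (a b d : ℤ) : Set ℤ := {x | a ≤ x ∧ x ≤ b ∧ d ∣ (x - a)}

/-- The nonzero entries of the vector `v` alternate in sign: any two consecutive
nonzero entries have opposite signs. -/
def AltSign (k : ℕ) (v : Fin k → ℤ) : Prop :=
  ∀ c₁ c₂ : Fin k, c₁ < c₂ → v c₁ ≠ 0 → v c₂ ≠ 0 →
    (∀ c : Fin k, c₁ < c → c < c₂ → v c = 0) → v c₂ = -v c₁

/-- `A` is a `k × k` alternating sign matrix: entries in `{-1,0,1}`, the nonzero
entries of each row and column alternate in sign, and each row and column sums to `1`. -/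
def IsASM (k : ℕ) (A : Matrix (Fin k) (Fin k) ℤ) : Prop :=
  (∀ i c, A i c = -1 ∨ A i c = 0 ∨ A i c = 1) ∧
  (∀ i, AltSign k (fun c => A i c)) ∧ (∀ c, AltSign k (fun i => A i c)) ∧
  (∀ i, ∑ c, A i c = 1) ∧ (∀ c, ∑ i, A i c = 1)

/-- `A` avoids `(S, j)`: `j + 2i + 4l - 3k - 3 ∉ S` whenever `A_{il} = 1`
(rows and columns indexed `1, …, k`; here `Fin k` indices are shifted by one). -/
def ASMAvoids (k : ℕ) (j : ℤ) (S : Set ℤ) (A : Matrix (Fin k) (Fin k) ℤ) : Prop :=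
  ∀ i c : Fin k, A i c = 1 → j + 2 * ((i : ℤ) + 1) + 4 * ((c : ℤ) + 1) - 3 * k - 3 ∉ S

/-!
Write `cornerPoint k i l c` for the triple `(i + l - k, l - i, 2 (i + l) - k - 2 - 4 c)`. In these
coordinates `Q_k` is the region `max 0 (i + l - k) ≤ c < min i l`, whose bounds are the extreme
corner sums at `(i, l)` of a `k × k` alternating sign matrix. The trace on `Q_k` of an order ideal
`I` of `P_k` is the set of points with `C i l ≤ c` for a corner-sum function `C`, hence `I` gives
rise to an alternating sign matrix `A`. An entry `1` of `A` is a place where `C` takes the values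
`c, c, c, c + 1` on a unit square, and there the element `cornerPoint (k + 1) (i + 1) (l + 1) c` of
`Q_{k+1}` has its lower covers in `I` and its upper covers outside `I`, so it can be toggled freely.
As `A` does not avoid `(S, j)`, one of these elements has its variable specialised to `-1`, and
toggling it changes the sign of the term of `I`. Since `A` only depends on `I ∩ Q_k`, which the
toggle preserves, the terms with a given `I ∩ Q_k` add up to zero.
-/

section SymmDiff

open scoped symmDiff

lemma mem_symmDiff_singleton_of_ne {α : Type*} {s : Set α} {a b : α} (h : b ≠ a) :
    b ∈ s ∆ {a} ↔ b ∈ s := by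
  simp [Set.mem_symmDiff, h]

lemma prod_add_prod_symmDiff_singleton {α R : Type*} [DecidableEq α] [CommRing R] {f : α → R}
    {a : α} (ha : f a = -1) (s : Finset α) : ∏ b ∈ s, f b + ∏ b ∈ s ∆ {a}, f b = 0 := by
  by_cases has : a ∈ s
  · rw [symmDiff_of_ge (Finset.singleton_subset_iff.2 has), Finset.sdiff_singleton_eq_erase,
      ← Finset.mul_prod_erase s f has, ha, neg_one_mul, neg_add_cancel]
  · rw [(Finset.disjoint_singleton_right.2 has).symmDiff_eq_sup, sup_comm, Finset.sup_eq_union,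
      ← Finset.insert_eq, Finset.prod_insert has, ha, neg_one_mul, add_neg_cancel]

lemma sum_prod_eq_zero_of_symmDiff_mem {α R : Type*} [DecidableEq α] [CommRing R] {f : α → R}
    {a : α} (ha : f a = -1) {T : Finset (Finset α)} (hT : ∀ s ∈ T, s ∆ {a} ∈ T) :
    ∑ s ∈ T, ∏ b ∈ s, f b = 0 :=
  Finset.sum_involution (fun s _ => s ∆ {a}) (fun s _ => prod_add_prod_symmDiff_singleton ha s)
    (fun s _ _ => by simp [symmDiff_eq_left]) hT (fun s _ => symmDiff_symmDiff_cancel_right _ s)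

end SymmDiff

section CornerSum

/-- Corner-sum matrices of size `k` in the sense of Robbins and Rumsey: `C i l` plays the role of
the sum of the entries of an alternating sign matrix in its first `i` rows and `l` columns. Only
the values with `i, l ≤ k` matter. -/
structure IsCornerSum (k : ℕ) (C : ℕ → ℕ → ℤ) : Prop where
  left : ∀ i ≤ k, C i 0 = 0
  top : ∀ l ≤ k, C 0 l = 0
  right : ∀ i ≤ k, C i k = i
  bottom : ∀ l ≤ k, C k l = l
  le_succ_row : ∀ i < k, ∀ l ≤ k, C i l ≤ C (i + 1) l
  succ_row_le : ∀ i < k, ∀ l ≤ k, C (i + 1) l ≤ C i l + 1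
  le_succ_col : ∀ i ≤ k, ∀ l < k, C i l ≤ C i (l + 1)
  succ_col_le : ∀ i ≤ k, ∀ l < k, C i (l + 1) ≤ C i l + 1

/-- The matrix whose corner sums are `C`, for `C` vanishing where `i = 0` or `l = 0`. -/
def secondDiff (k : ℕ) (C : ℕ → ℕ → ℤ) : Matrix (Fin k) (Fin k) ℤ :=
  fun i l => C (i + 1) (l + 1) - C i (l + 1) - (C (i + 1) l - C i l)

variable {k : ℕ} {C : ℕ → ℕ → ℤ}

lemma altSign_succ_sub {a : ℕ → ℤ} (ha : ∀ n ≤ k, 0 ≤ a n ∧ a n ≤ 1) :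
    AltSign k (fun n => a (n + 1) - a n) := by
  intro m n hmn hm hn hzero
  have hconst : ∀ p : ℕ, (m : ℕ) + 1 ≤ p → p ≤ n → a p = a (m + 1) := by
    intro p hmp
    induction p, hmp using Nat.le_induction with
    | base => exact fun _ => rfl
    | succ p hmp ih =>
      intro hpn
      have hp : a (p + 1) - a p = 0 := hzero ⟨p, by omega⟩ (Fin.lt_def.2 hmp) (Fin.lt_def.2 hpn)
      rw [← ih (by omega)]
      exact sub_eq_zero.1 hp
  have heq := hconst n hmn le_rfl
  have := ha m (by omega)
  have := ha (m + 1) (by omega)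
  have := ha (n + 1) (by omega)
  simp only at hm hn ⊢
  omega

lemma sum_fin_succ_sub (a : ℕ → ℤ) : ∑ n : Fin k, (a (n + 1) - a n) = a k - a 0 := by
  rw [Fin.sum_univ_eq_sum_range (fun n => a (n + 1) - a n), Finset.sum_range_sub]

lemma IsCornerSum.swap (hC : IsCornerSum k C) : IsCornerSum k (Function.swap C) where
  left := hC.top
  top := hC.left
  right := hC.bottom
  bottom := hC.right
  le_succ_row := fun l hl i hi => hC.le_succ_col i hi l hl
  succ_row_le := fun l hl i hi => hC.succ_col_le i hi l hl
  le_succ_col := fun l hl i hi => hC.le_succ_row i hi l hl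
  succ_col_le := fun l hl i hi => hC.succ_row_le i hi l hl

lemma secondDiff_swap (i l : Fin k) : secondDiff k (Function.swap C) l i = secondDiff k C i l := by
  simp only [secondDiff, Function.swap]
  ring

lemma IsCornerSum.altSign_row (hC : IsCornerSum k C) (i : Fin k) :
    AltSign k (fun l => secondDiff k C i l) :=
  altSign_succ_sub (a := fun l => C (i + 1) l - C i l) fun l hl => by
    have := hC.le_succ_row i i.2 l hl
    have := hC.succ_row_le i i.2 l hl
    omega

lemma IsCornerSum.sum_row (hC : IsCornerSum k C) (i : Fin k) : ∑ l, secondDiff k C i l = 1 := by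
  refine (sum_fin_succ_sub fun l => C (i + 1) l - C i l).trans ?_
  rw [hC.right _ i.2, hC.right _ i.2.le, hC.left _ i.2, hC.left _ i.2.le]
  push_cast
  ring

lemma IsCornerSum.isASM (hC : IsCornerSum k C) : IsASM k (secondDiff k C) := by
  refine ⟨fun i l => ?_, hC.altSign_row, fun l => ?_, hC.sum_row, fun l => ?_⟩
  · have := hC.le_succ_row i i.2 l l.2.le
    have := hC.succ_row_le i i.2 l l.2.le
    have := hC.le_succ_row i i.2 (l + 1) l.2
    have := hC.succ_row_le i i.2 (l + 1) l.2
    rw [secondDiff]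
    omega
  · simpa only [secondDiff_swap] using hC.swap.altSign_row l
  · simpa only [secondDiff_swap] using hC.swap.sum_row l

lemma IsCornerSum.eq_of_secondDiff_eq_one (hC : IsCornerSum k C) {i l : Fin k}
    (h : secondDiff k C i l = 1) :
    C (i + 1) l = C i l ∧ C i (l + 1) = C i l ∧ C (i + 1) (l + 1) = C i l + 1 := by
  have := hC.le_succ_row i i.2 l l.2.le
  have := hC.le_succ_col i i.2.le l l.2
  have := hC.succ_row_le i i.2 (l + 1) l.2
  have := hC.succ_col_le (i + 1) i.2 l l.2
  rw [secondDiff] at h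
  omega

end CornerSum

section Poset

variable {k : ℤ} {p q r : ℤ × ℤ × ℤ}

/-- Matrix coordinates on `Q_k`: the point expressing that the corner sum at `(i, l)` is at most
`c`. -/
def cornerPoint (k i l c : ℤ) : ℤ × ℤ × ℤ := (i + l - k, l - i, 2 * (i + l) - k - 2 - 4 * c)

lemma cornerPoint_mem_pentagramQ {i l c : ℤ} :
    cornerPoint k i l c ∈ pentagramQ k ↔ 0 ≤ c ∧ i + l - k ≤ c ∧ c < i ∧ c < l := by
  simp only [cornerPoint, pentagramQ, Set.mem_ofPred_eq, Int.abs_eq_natAbs]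
  omega

lemma exists_cornerPoint_eq (hp : p ∈ pentagramQ k) : ∃ i l c, cornerPoint k i l c = p := by
  obtain ⟨r, s, t⟩ := p
  simp only [pentagramQ, Set.mem_ofPred_eq, Int.abs_eq_natAbs] at hp
  refine ⟨(r - s + k) / 2, (r + s + k) / 2, (2 * (r + k) - k - 2 - t) / 4, ?_⟩
  simp only [cornerPoint, Prod.mk.injEq]
  omega

lemma cornerPoint_covers_succ_iff {i l c i' l' c' : ℤ} :
    pentagramCovers (cornerPoint k i l c) (cornerPoint (k + 1) i' l' c') ↔
      c' = c ∧ (i' = i + 1 ∧ l' = l ∨ i' = i ∧ l' = l + 1) := by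
  simp only [cornerPoint, pentagramCovers, Int.abs_eq_natAbs]
  omega

lemma cornerPoint_succ_covers_iff {i l c i' l' c' : ℤ} :
    pentagramCovers (cornerPoint (k + 1) i l c) (cornerPoint k i' l' c') ↔
      i' = i ∧ l' = l ∧ c' = c ∨ i' = i - 1 ∧ l' = l - 1 ∧ c' = c - 1 := by
  simp only [cornerPoint, pentagramCovers, Int.abs_eq_natAbs]
  omega

lemma two_dvd_sub_of_mem_pentagramQ (hp : p ∈ pentagramQ k) : (2 : ℤ) ∣ p.2.2 - k := by
  obtain ⟨-, -, h, -⟩ := hp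
  omega

lemma notMem_pentagramQ_of_mem_succ (hp : p ∈ pentagramQ (k + 1)) : p ∉ pentagramQ k := by
  intro hp'
  have := two_dvd_sub_of_mem_pentagramQ hp
  have := two_dvd_sub_of_mem_pentagramQ hp'
  omega

lemma mem_pentagramQ_of_covers (hp : p ∈ pentagramQ (k + 1)) (hq : q ∈ pentagramP k)
    (h : pentagramCovers p q ∨ pentagramCovers q p) : q ∈ pentagramQ k := by
  refine hq.resolve_right fun hq' => ?_
  have := two_dvd_sub_of_mem_pentagramQ hp
  have := two_dvd_sub_of_mem_pentagramQ hq'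
  rcases h with ⟨h, -⟩ | ⟨h, -⟩ <;> omega

lemma isPentagramOrderIdeal_iff {I : Set (ℤ × ℤ × ℤ)} :
    IsPentagramOrderIdeal k I ↔ I ⊆ pentagramP k ∧
      ∀ p q, p ∈ pentagramP k → q ∈ I → pentagramCovers p q → p ∈ I := by
  refine and_congr_right fun hI => ⟨fun h p q hp hq hpq => ?_, fun h p q hq hpq => ?_⟩
  · exact h p q hq (.single ⟨hp, hI hq, hpq⟩)
  · induction hpq using Relation.ReflTransGen.head_induction_on with
    | refl => exact hq
    | head hab _ ih => exact h _ _ hab.1 ih hab.2.2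

lemma IsPentagramOrderIdeal.mem_of_covers_of_covers {I : Set (ℤ × ℤ × ℤ)}
    (hI : IsPentagramOrderIdeal k I) (hr : r ∈ I) (hp : p ∈ pentagramP k) (hq : q ∈ pentagramP k)
    (hpq : pentagramCovers p q) (hqr : pentagramCovers q r) : p ∈ I := by
  obtain ⟨-, hdown⟩ := isPentagramOrderIdeal_iff.1 hI
  exact hdown p q hp (hdown q r hq hr hqr) hpq

end Poset

section IdealCornerSum

variable {k : ℤ} {I : Set (ℤ × ℤ × ℤ)} {i l c : ℤ}

/-- The upper bounds that `I` prescribes for the corner sum at `(i, l)`. The constraint is void for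
`c ≥ min i l`, where `cornerPoint k i l c` lies outside `Q_k`. -/
def cornerBounds (k : ℤ) (I : Set (ℤ × ℤ × ℤ)) (i l : ℤ) : Set ℤ :=
  {c | 0 ≤ c ∧ i + l - k ≤ c ∧ (c < i → c < l → cornerPoint k i l c ∈ I)}

/-- The corner-sum function of `I`: for `0 ≤ i, l ≤ k` it is the least `c` such that
`cornerPoint k i l c` lies in `I ∩ Q_k`, or `min i l` if there is none. -/
def idealCornerSum (k : ℤ) (I : Set (ℤ × ℤ × ℤ)) (i l : ℤ) : ℤ := sInf (cornerBounds k I i l)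

lemma mem_cornerBounds_of_succ_row (hI : IsPentagramOrderIdeal k I)
    (h : c ∈ cornerBounds k I (i + 1) l) : c ∈ cornerBounds k I i l := by
  obtain ⟨h0, hk, h⟩ := h
  refine ⟨h0, by omega, fun hi hl => ?_⟩
  exact hI.mem_of_covers_of_covers (q := cornerPoint (k + 1) (i + 1) l c) (h (by omega) hl)
    (.inl (cornerPoint_mem_pentagramQ.2 (by omega)))
    (.inr (cornerPoint_mem_pentagramQ.2 (by omega)))
    (cornerPoint_covers_succ_iff.2 (by omega)) (cornerPoint_succ_covers_iff.2 (by omega))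

lemma mem_cornerBounds_of_succ_col (hI : IsPentagramOrderIdeal k I)
    (h : c ∈ cornerBounds k I i (l + 1)) : c ∈ cornerBounds k I i l := by
  obtain ⟨h0, hk, h⟩ := h
  refine ⟨h0, by omega, fun hi hl => ?_⟩
  exact hI.mem_of_covers_of_covers (q := cornerPoint (k + 1) i (l + 1) c) (h hi (by omega))
    (.inl (cornerPoint_mem_pentagramQ.2 (by omega)))
    (.inr (cornerPoint_mem_pentagramQ.2 (by omega)))
    (cornerPoint_covers_succ_iff.2 (by omega)) (cornerPoint_succ_covers_iff.2 (by omega))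

lemma succ_mem_cornerBounds_succ_row (hI : IsPentagramOrderIdeal k I)
    (h : c ∈ cornerBounds k I i l) : c + 1 ∈ cornerBounds k I (i + 1) l := by
  obtain ⟨h0, hk, h⟩ := h
  refine ⟨by omega, by omega, fun hi hl => ?_⟩
  exact hI.mem_of_covers_of_covers (q := cornerPoint (k + 1) (i + 1) (l + 1) (c + 1))
    (h (by omega) (by omega))
    (.inl (cornerPoint_mem_pentagramQ.2 (by omega)))
    (.inr (cornerPoint_mem_pentagramQ.2 (by omega)))
    (cornerPoint_covers_succ_iff.2 (by omega)) (cornerPoint_succ_covers_iff.2 (by omega))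

lemma succ_mem_cornerBounds_succ_col (hI : IsPentagramOrderIdeal k I)
    (h : c ∈ cornerBounds k I i l) : c + 1 ∈ cornerBounds k I i (l + 1) := by
  obtain ⟨h0, hk, h⟩ := h
  refine ⟨by omega, by omega, fun hi hl => ?_⟩
  exact hI.mem_of_covers_of_covers (q := cornerPoint (k + 1) (i + 1) (l + 1) (c + 1))
    (h (by omega) (by omega))
    (.inl (cornerPoint_mem_pentagramQ.2 (by omega)))
    (.inr (cornerPoint_mem_pentagramQ.2 (by omega)))
    (cornerPoint_covers_succ_iff.2 (by omega)) (cornerPoint_succ_covers_iff.2 (by omega))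

lemma mem_cornerBounds_mono (hI : IsPentagramOrderIdeal k I) {d : ℤ}
    (h : c ∈ cornerBounds k I i l) (hcd : c ≤ d) : d ∈ cornerBounds k I i l := by
  induction d, hcd using Int.leInduction with
  | base => exact h
  | succ d _ ih => exact mem_cornerBounds_of_succ_row hI (succ_mem_cornerBounds_succ_row hI ih)

lemma bddBelow_cornerBounds : BddBelow (cornerBounds k I i l) := ⟨0, fun _ h => h.1⟩

lemma idealCornerSum_le (h : c ∈ cornerBounds k I i l) : idealCornerSum k I i l ≤ c :=
  csInf_le bddBelow_cornerBounds h

lemma idealCornerSum_mem : idealCornerSum k I i l ∈ cornerBounds k I i l :=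
  Int.csInf_mem ⟨max (max 0 (i + l - k)) i, by omega, by omega, fun _ _ => by omega⟩
    bddBelow_cornerBounds

lemma idealCornerSum_le_min (hi : 0 ≤ i) (hik : i ≤ k) (hl : 0 ≤ l) (hlk : l ≤ k) :
    idealCornerSum k I i l ≤ min i l :=
  idealCornerSum_le ⟨by omega, by omega, by omega⟩

lemma cornerPoint_mem_iff (hI : IsPentagramOrderIdeal k I)
    (h : cornerPoint k i l c ∈ pentagramQ k) :
    cornerPoint k i l c ∈ I ↔ idealCornerSum k I i l ≤ c := by
  obtain ⟨h0, hk, hi, hl⟩ := cornerPoint_mem_pentagramQ.1 h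
  exact ⟨fun hmem => idealCornerSum_le ⟨h0, hk, fun _ _ => hmem⟩,
    fun hle => (mem_cornerBounds_mono hI idealCornerSum_mem hle).2.2 hi hl⟩

end IdealCornerSum

lemma isCornerSum_idealCornerSum {k : ℕ} {I : Set (ℤ × ℤ × ℤ)} (hI : IsPentagramOrderIdeal k I) :
    IsCornerSum k (fun i l => idealCornerSum k I i l) := by
  have hle {i l : ℕ} (hi : i ≤ k) (hl : l ≤ k) :
      idealCornerSum k I i l ≤ min (i : ℤ) l :=
    idealCornerSum_le_min (by omega) (by omega) (by omega) (by omega)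
  have hnonneg (i l : ℕ) : 0 ≤ idealCornerSum k I i l := idealCornerSum_mem.1
  have hge (i l : ℕ) : (i : ℤ) + l - k ≤ idealCornerSum k I i l := idealCornerSum_mem.2.1
  constructor
  case left =>
    intro i hi
    have := hle hi k.zero_le
    have := hnonneg i 0
    omega
  case top =>
    intro l hl
    have := hle k.zero_le hl
    have := hnonneg 0 l
    omega
  case right =>
    intro i hi
    have := hle hi le_rfl
    have := hge i k
    omega
  case bottom =>
    intro l hl
    have := hle le_rfl hl
    have := hge k l
    omega
  case le_succ_row =>
    intro i _ l _
    exact idealCornerSum_le (mem_cornerBounds_of_succ_row hI (mod_cast idealCornerSum_mem))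
  case succ_row_le =>
    intro i _ l _
    exact mod_cast idealCornerSum_le (succ_mem_cornerBounds_succ_row hI idealCornerSum_mem)
  case le_succ_col =>
    intro i _ l _
    exact idealCornerSum_le (mem_cornerBounds_of_succ_col hI (mod_cast idealCornerSum_mem))
  case succ_col_le =>
    intro i _ l _
    exact mod_cast idealCornerSum_le (succ_mem_cornerBounds_succ_col hI idealCornerSum_mem)

section Toggle

open scoped symmDiff

/-- `x ∈ Q_{k+1}` is free over `I` if its lower covers lie in `I` and its upper covers do not.
This only depends on `I ∩ Q_k`, and allows `x` to be added to or removed from an order ideal. -/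
def IsFree (k : ℤ) (I : Set (ℤ × ℤ × ℤ)) (x : ℤ × ℤ × ℤ) : Prop :=
  x ∈ pentagramQ (k + 1) ∧ (∀ y ∈ pentagramQ k, pentagramCovers y x → y ∈ I) ∧
    ∀ y ∈ pentagramQ k, pentagramCovers x y → y ∉ I

variable {k : ℤ} {I J : Set (ℤ × ℤ × ℤ)} {x : ℤ × ℤ × ℤ}

lemma IsFree.congr (hx : IsFree k I x) (h : J ∩ pentagramQ k = I ∩ pentagramQ k) :
    IsFree k J x := by
  have hiff (y) (hy : y ∈ pentagramQ k) : y ∈ J ↔ y ∈ I := by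
    simpa [hy] using Set.ext_iff.1 h y
  exact ⟨hx.1, fun y hy hyx => (hiff y hy).2 (hx.2.1 y hy hyx),
    fun y hy hxy hyJ => hx.2.2 y hy hxy ((hiff y hy).1 hyJ)⟩

lemma isFree_cornerPoint (hI : IsPentagramOrderIdeal k I) {i l c : ℤ}
    (hi : c ≤ i) (hl : c ≤ l) (h00 : idealCornerSum k I i l = c)
    (h10 : idealCornerSum k I (i + 1) l = c) (h01 : idealCornerSum k I i (l + 1) = c)
    (h11 : idealCornerSum k I (i + 1) (l + 1) = c + 1) :
    IsFree k I (cornerPoint (k + 1) (i + 1) (l + 1) c) := by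
  have hc : 0 ≤ idealCornerSum k I i l := idealCornerSum_mem.1
  have hck : i + 1 + (l + 1) - k ≤ idealCornerSum k I (i + 1) (l + 1) := idealCornerSum_mem.2.1
  refine ⟨cornerPoint_mem_pentagramQ.2 (by omega), fun y hy hyx => ?_, fun y hy hxy => ?_⟩ <;>
    obtain ⟨i', l', c', rfl⟩ := exists_cornerPoint_eq hy <;>
    rw [cornerPoint_mem_iff hI hy]
  · obtain ⟨rfl, ⟨hi', rfl⟩ | ⟨rfl, hl'⟩⟩ := cornerPoint_covers_succ_iff.1 hyx
    · obtain rfl : i = i' := by omega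
      exact h01.le
    · obtain rfl : l = l' := by omega
      exact h10.le
  · obtain ⟨rfl, rfl, rfl⟩ | ⟨rfl, rfl, rfl⟩ := cornerPoint_succ_covers_iff.1 hxy
    · omega
    · simp only [add_sub_cancel_right]
      omega

lemma IsFree.symmDiff_inter (hx : IsFree k I x) :
    (I ∆ {x}) ∩ pentagramQ k = I ∩ pentagramQ k := by
  ext y
  refine and_congr_left fun hy => mem_symmDiff_singleton_of_ne ?_
  rintro rfl
  exact notMem_pentagramQ_of_mem_succ hx.1 hy

lemma IsFree.isPentagramOrderIdeal_symmDiff (hx : IsFree k I x)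
    (hI : IsPentagramOrderIdeal k I) : IsPentagramOrderIdeal k (I ∆ {x}) := by
  rw [isPentagramOrderIdeal_iff] at hI ⊢
  obtain ⟨hIP, hdown⟩ := hI
  obtain ⟨hxQ, hlow, hup⟩ := hx
  have hne {y} (hy : y ∈ pentagramQ k) : y ≠ x := by
    rintro rfl
    exact notMem_pentagramQ_of_mem_succ hxQ hy
  refine ⟨fun y hy => ?_, fun y z hy hz hyz => ?_⟩
  · by_cases hyx : y = x
    · exact hyx ▸ .inr hxQ
    · exact hIP ((mem_symmDiff_singleton_of_ne hyx).1 hy)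
  · by_cases hzx : z = x
    · subst hzx
      have hyQ := mem_pentagramQ_of_covers hxQ hy (.inr hyz)
      exact (mem_symmDiff_singleton_of_ne (hne hyQ)).2 (hlow y hyQ hyz)
    · have hzI := (mem_symmDiff_singleton_of_ne hzx).1 hz
      have hyx : y ≠ x := by
        rintro rfl
        exact hup z (mem_pentagramQ_of_covers hxQ (hIP hzI) (.inl hyz)) hyz hzI
      exact (mem_symmDiff_singleton_of_ne hyx).2 (hdown y z hy hzI hyz)

end Toggle

lemma exists_isFree_mem {k : ℕ} {j : ℤ} {S : Set ℤ}
    (h : ∀ A : Matrix (Fin k) (Fin k) ℤ, IsASM k A → ¬ ASMAvoids k j S A)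
    {I : Set (ℤ × ℤ × ℤ)} (hI : IsPentagramOrderIdeal k I) :
    ∃ x, IsFree k I x ∧ 3 * x.1 + x.2.1 + j ∈ S := by
  have hC := isCornerSum_idealCornerSum hI
  obtain ⟨i, l, hone, hS⟩ : ∃ i l : Fin k,
      secondDiff k (fun i l => idealCornerSum k I i l) i l = 1 ∧
        j + 2 * ((i : ℤ) + 1) + 4 * ((l : ℤ) + 1) - 3 * k - 3 ∈ S := by
    simpa only [ASMAvoids, not_forall, not_not, exists_prop] using h _ hC.isASM
  obtain ⟨h10, h01, h11⟩ := hC.eq_of_secondDiff_eq_one hone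
  push_cast at h10 h01 h11
  have hmin : idealCornerSum k I i l ≤ min (i : ℤ) l :=
    idealCornerSum_le_min (by omega) (by omega) (by omega) (by omega)
  refine ⟨_, isFree_cornerPoint hI (by omega) (by omega) rfl h10 h01 h11, ?_⟩
  convert hS using 1
  simp only [cornerPoint]
  ring

/-- The order ideals of `P_k`, which index the terms of `F_{j,k}`. -/
def pentagramIdeals (k : ℤ) : Finset (Finset (ℤ × ℤ × ℤ)) :=
  (pentagramPFinset k).powerset.filter
    (fun I : Finset (ℤ × ℤ × ℤ) => IsPentagramOrderIdeal k (↑I : Set (ℤ × ℤ × ℤ)))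

lemma mem_pentagramPFinset {k : ℤ} {p : ℤ × ℤ × ℤ} :
    p ∈ pentagramPFinset k ↔ p ∈ pentagramP k := by
  simp only [pentagramPFinset, Finset.mem_filter, Finset.mem_product, Finset.mem_Icc,
    and_iff_right_iff_imp, pentagramP, pentagramQ, Set.mem_union, Set.mem_ofPred_eq,
    Int.abs_eq_natAbs]
  omega

lemma mem_pentagramIdeals {k : ℤ} {I : Finset (ℤ × ℤ × ℤ)} :
    I ∈ pentagramIdeals k ↔ IsPentagramOrderIdeal k (I : Set (ℤ × ℤ × ℤ)) := by
  rw [pentagramIdeals, Finset.mem_filter, Finset.mem_powerset, and_iff_right_iff_imp]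
  exact fun hI p hp => mem_pentagramPFinset.2 (hI.1 hp)

lemma map_pentagramF {R : Type*} [CommRing R] (φ : MvPolynomial ℤ ℤ →+* R) (j k : ℤ) :
    φ (pentagramF j k) = ∑ I ∈ pentagramIdeals k, ∏ p ∈ I, φ (X (3 * p.1 + p.2.1 + j)) := by
  simp only [pentagramF, pentagramIdeals, map_sum, map_prod]

lemma IsFree.sum_fiber_eq_zero {R : Type*} [CommRing R] {k : ℤ} {I : Finset (ℤ × ℤ × ℤ)}
    {x : ℤ × ℤ × ℤ} (hx : IsFree k I x) {f : ℤ × ℤ × ℤ → R} (hf : f x = -1) :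
    ∑ J ∈ (pentagramIdeals k).filter (fun J : Finset (ℤ × ℤ × ℤ) =>
      (J : Set (ℤ × ℤ × ℤ)) ∩ pentagramQ k = ↑I ∩ pentagramQ k), ∏ p ∈ J, f p = 0 := by
  refine sum_prod_eq_zero_of_symmDiff_mem hf fun J hJ => ?_
  rw [Finset.mem_filter, mem_pentagramIdeals] at hJ ⊢
  rw [Finset.coe_symmDiff, Finset.coe_singleton]
  have hxJ := hx.congr hJ.2
  exact ⟨hxJ.isPentagramOrderIdeal_symmDiff hJ.1, hxJ.symmDiff_inter.trans hJ.2⟩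

theorem stmt6_general {R : Type*} [CommRing R] (k : ℕ) (j : ℤ) (S : Set ℤ)
    (h : ∀ A : Matrix (Fin k) (Fin k) ℤ, IsASM k A → ¬ ASMAvoids k j S A)
    (φ : MvPolynomial ℤ ℤ →+* R) (hφ : ∀ i ∈ S, φ (X i) = -1) :
    φ (pentagramF j k) = 0 := by
  rw [map_pentagramF]
  refine Finset.sum_cancels_of_partition_cancels
    (Setoid.ker fun I : Finset (ℤ × ℤ × ℤ) => (I : Set (ℤ × ℤ × ℤ)) ∩ pentagramQ k) fun I hI => ?_
  obtain ⟨x, hx, hxS⟩ := exists_isFree_mem h (mem_pentagramIdeals.1 hI)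
  exact hx.sum_fiber_eq_zero (f := fun p => φ (X (3 * p.1 + p.2.1 + j))) (hφ _ hxS)

theorem stmt6 (k : ℕ) (hk : 1 ≤ k) (j : ℤ) (S : Set ℤ)
    (hpar : ∀ x ∈ S, (2 : ℤ) ∣ (x - (j + k + 1)))
    (h : ∀ A : Matrix (Fin k) (Fin k) ℤ, IsASM k A → ¬ ASMAvoids k j S A) :
    substNeg S (pentagramF j k) = 0 :=
  stmt6_general k j S h (substNeg S) fun i hi => by simp [substNeg, hi]

end
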